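/- Every deterministic Büchi automaton that recognises L_main has at least 66 states. -/

import Mathlib

/-- A (nondeterministic) Büchi/coBüchi automaton: an initial state, a set of
transitions, and a subset of *significant* transitions. -/
structure BuchiAutomaton (σ : Type) (Q : Type) where
  init : Q
  trans : Set (Q × σ × Q)
  sig : Set (Q × σ × Q)
  sig_sub : sig ⊆ trans

namespace BuchiAutomaton

variable {σ Q : Type}

/-- `ρ` is a run of `A` on the infinite word `w`, starting at the state `p`. -/
def IsRunFrom (A : BuchiAutomaton σ Q) (p : Q) (w : ℕ → σ) (ρ : ℕ → Q) : Prop :=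
  ρ 0 = p ∧ ∀ i, (ρ i, w i, ρ (i + 1)) ∈ A.trans

/-- Büchi acceptance: the run contains infinitely many significant transitions. -/
def BuchiAcc (A : BuchiAutomaton σ Q) (w : ℕ → σ) (ρ : ℕ → Q) : Prop :=
  ∀ N, ∃ i, N ≤ i ∧ (ρ i, w i, ρ (i + 1)) ∈ A.sig

/-- coBüchi acceptance: the run contains finitely many significant transitions. -/
def CoBuchiAcc (A : BuchiAutomaton σ Q) (w : ℕ → σ) (ρ : ℕ → Q) : Prop :=
  ∃ N, ∀ i, N ≤ i → (ρ i, w i, ρ (i + 1)) ∉ A.sig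

/-- The language of `A` (as a Büchi automaton), with initial state `p`. -/
def LangFrom (A : BuchiAutomaton σ Q) (p : Q) : Set (ℕ → σ) :=
  {w | ∃ ρ, A.IsRunFrom p w ρ ∧ A.BuchiAcc w ρ}

/-- The language of `A`, read as a Büchi automaton. -/
def Lang (A : BuchiAutomaton σ Q) : Set (ℕ → σ) :=
  A.LangFrom A.init

/-- The language of `A`, read as a coBüchi automaton. -/
def CoLang (A : BuchiAutomaton σ Q) : Set (ℕ → σ) :=
  {w | ∃ ρ, A.IsRunFrom A.init w ρ ∧ A.CoBuchiAcc w ρ}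

/-- `A` is deterministic: at most one outgoing transition per state and letter. -/
def Deterministic (A : BuchiAutomaton σ Q) : Prop :=
  ∀ p a q q', (p, a, q) ∈ A.trans → (p, a, q') ∈ A.trans → q = q'

/-- `FinRun A l p`: `l` is a finite run of `A` from the initial state, ending in
the state `p` (represented as the chronological list of its transitions). -/
inductive FinRun (A : BuchiAutomaton σ Q) : List (Q × σ × Q) → Q → Prop
  | nil : FinRun A [] A.init
  | snoc {l : List (Q × σ × Q)} {p : Q} {a : σ} {q : Q} :
      FinRun A l p → (p, a, q) ∈ A.trans → FinRun A (l ++ [(p, a, q)]) q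

/-- A resolver for `A`: a function from finite runs and letters to transitions,
such that on every finite run from the initial state ending in a state `p` and
every letter `a`, it outputs a transition on `a` with source `p`. -/
structure Resolver (A : BuchiAutomaton σ Q) where
  res : List (Q × σ × Q) → σ → Q × σ × Q
  res_valid : ∀ l p a, A.FinRun l p →
    (res l a).1 = p ∧ (res l a).2.1 = a ∧ res l a ∈ A.trans

/-- The history (finite run) built by a resolver after reading `n` letters of `w`. -/
def Resolver.hist {A : BuchiAutomaton σ Q} (r : Resolver A) (w : ℕ → σ) : ℕ → List (Q × σ × Q)
  | 0 => []
  | n + 1 => r.hist w n ++ [r.res (r.hist w n) (w n)]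

/-- The run induced by the resolver on `w` satisfies the Büchi condition. -/
def Resolver.InducedBuchiAcc {A : BuchiAutomaton σ Q} (r : Resolver A) (w : ℕ → σ) : Prop :=
  ∀ N, ∃ n, N ≤ n ∧ r.res (r.hist w n) (w n) ∈ A.sig

/-- The run induced by the resolver on `w` satisfies the coBüchi condition. -/
def Resolver.InducedCoBuchiAcc {A : BuchiAutomaton σ Q} (r : Resolver A) (w : ℕ → σ) : Prop :=
  ∃ N, ∀ n, N ≤ n → r.res (r.hist w n) (w n) ∉ A.sig

/-- `A` is history-deterministic (as a Büchi automaton). -/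
def HistoryDeterministic (A : BuchiAutomaton σ Q) : Prop :=
  ∃ r : Resolver A, ∀ w ∈ A.Lang, r.InducedBuchiAcc w

/-- `A` is history-deterministic (as a coBüchi automaton). -/
def CoHistoryDeterministic (A : BuchiAutomaton σ Q) : Prop :=
  ∃ r : Resolver A, ∀ w ∈ A.CoLang, r.InducedCoBuchiAcc w

end BuchiAutomaton

/-- The finite factor `w[m..n)` of the infinite word `w`, as a list. -/
def wordSegment {σ : Type} (w : ℕ → σ) (m n : ℕ) : List σ :=
  (List.range (n - m)).map fun i => w (m + i)

/-- `omegaPow X`: the infinite words that can be written as an infinite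
concatenation of finite words, each belonging to `X`. -/
def omegaPow {σ : Type} (X : Set (List σ)) : Set (ℕ → σ) :=
  {w | ∃ φ : ℕ → ℕ, φ 0 = 0 ∧ StrictMono φ ∧ ∀ k, wordSegment w (φ k) (φ (k + 1)) ∈ X}

/-- The alphabet `Σ = {a, b, c, 1, …, 6, r₁, …, r₆, y}` (with `num i` the digit
`i+1` and `res i` the reset letter `r_{i+1}`). -/
inductive Al : Type
  | a | b | c
  | num (i : Fin 6)
  | res (i : Fin 6)
  | y
deriving DecidableEq, Fintype

/-- The states of the classifier DFA. -/
inductive CSt : Type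
  | p | q | t | s | r
  | ell (i : Fin 6)
deriving DecidableEq, Fintype

/-- The (partial) transition function of the classifier. A digit `num i` belongs
to `E = {1,2,3}` iff `i.val < 3`, and to `F = {4,5,6}` otherwise. -/
def clStep : CSt → Al → Option CSt
  | .p, .b => some .p
  | .p, .num _ => some .p
  | .p, .y => some .p
  | .p, .a => some .q
  | .p, .c => some .t
  | .q, .a => some .q
  | .q, .num _ => some .p
  | .q, .y => some .p
  | .q, .b => some .r
  | .q, .c => some .s
  | .t, .c => some .t
  | .t, .b => some .p
  | .t, .a => some .q
  | .t, .num i => if i.val < 3 then some (.ell i) else some .p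
  | .t, .y => some .p
  | .s, .c => some .s
  | .s, .b => some .r
  | .s, .a => some .q
  | .s, .num i => if i.val < 3 then some (.ell i) else some .p
  | .s, .y => some .p
  | .r, .b => some .r
  | .r, .a => some .q
  | .r, .c => some .s
  | .r, .num i => if 3 ≤ i.val then some (.ell i) else some .p
  | .r, .y => some .p
  | _, _ => none

/-- The run of the classifier on a finite word, from a given state. -/
def clRun : CSt → List Al → Option CSt
  | c, [] => some c
  | c, l :: w =>
    match clStep c l with
    | some c' => clRun c' w
    | none => none

/-- The language `L_α` (for `α : Fin 6`, representing `L_{α+1}`): the finite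
words whose run in the classifier from `p` is defined and ends in `ℓ_α`. -/
def Lcl (α : Fin 6) : Set (List Al) :=
  {w | clRun .p w = some (.ell α)}

/-- `L_main = (Σ^* ⋃_{α≠β} (L_α ∪ {r_α}) L_β L_β Σ^* y)^ω`. -/
def LMain : Set (ℕ → Al) :=
  omegaPow {w | ∃ α β : Fin 6, α ≠ β ∧ ∃ u v₁ v₂ v₃ z : List Al,
    (v₁ ∈ Lcl α ∨ v₁ = [Al.res α]) ∧ v₂ ∈ Lcl β ∧ v₃ ∈ Lcl β ∧
    w = u ++ v₁ ++ v₂ ++ v₃ ++ z ++ [Al.y]}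

/-!
Call a word killing if it has a factor in `(L_i ∪ {r_i}) L_j L_j` with `i ≠ j`. These are the words
on which a partial automaton, the monitor, has no run from any state; it combines the five non-final
states of the classifier with twelve modes, namely the last label or reset letter and whether
repeating this label is forbidden. `L_main` consists of the words in which a killing word followed
by `y` occurs infinitely often.

In a deterministic automaton for `L_main`, the product with the monitor has a bottom component, the
core, in which no significant transition is taken, since otherwise a word outside `L_main` would be
accepted. A word that kills a monitor state but leads back into the core must take a significant
transition. Hence the core contains a copy of each of the `12 · 5 = 60` monitor states and these
copies are pairwise distinct; moreover there is a state from which the core is not reached without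
reading `y`.

Suppose that there are at most 65 states. Every bottom component of the product with the scan, the
monitor without modes, also has distinct copies of the five scan states. It meets the core:
otherwise these sixty-five copies would be all states, but the component can be left without reading
`y`, from the state just found into the core. So one can return to the core from everywhere without
completing a label. For some label `i`, this return never ends in the unarmed mode of `i` when it
starts in a state from which `y` is needed, as otherwise six such states would supplement the sixty
copies. For some scan state `x`, the monitor state with `i` armed and scan `x` has a single copy,
and reading a word of `L_i` leads from this copy out of the core to such a state. So one can arm
`i`, exit with a word of `L_i` and return, forever, and each round takes a significant transition.
But the monitor survives all rounds when it starts with `i` unarmed, so the resulting accepted word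
is not in `L_main`.
-/

/-! ### Factors of infinite words -/

section Words

variable {σ : Type}

theorem wordSegment_self (w : ℕ → σ) (m : ℕ) : wordSegment w m m = [] := by
  simp [wordSegment]

theorem wordSegment_succ (w : ℕ → σ) {m n : ℕ} (h : m ≤ n) :
    wordSegment w m (n + 1) = wordSegment w m n ++ [w n] := by
  have hlen : n + 1 - m = n - m + 1 := by omega
  simp [wordSegment, hlen, List.range_succ, Nat.add_sub_cancel' h]

theorem wordSegment_append_wordSegment (w : ℕ → σ) {m n k : ℕ} (hmn : m ≤ n) (hnk : n ≤ k) :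
    wordSegment w m n ++ wordSegment w n k = wordSegment w m k := by
  induction k, hnk using Nat.le_induction with
  | base => simp [wordSegment_self]
  | succ k hk ih =>
    rw [wordSegment_succ w hk, wordSegment_succ w (hmn.trans hk), ← List.append_assoc, ih]

theorem length_wordSegment (w : ℕ → σ) (m n : ℕ) : (wordSegment w m n).length = n - m := by
  simp [wordSegment]

theorem wordSegment_shift (w : ℕ → σ) (d m n : ℕ) :
    wordSegment (fun i => w (i + d)) m n = wordSegment w (m + d) (n + d) := by
  simp only [wordSegment, Nat.add_sub_add_right, Nat.add_right_comm]

theorem wordSegment_eq_append_cons {w : ℕ → σ} {m n : ℕ} {s t : List σ} {l : σ}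
    (h : wordSegment w m n = s ++ l :: t) :
    wordSegment w m (m + s.length) = s ∧ w (m + s.length) = l := by
  have hlen := congrArg List.length h
  simp only [length_wordSegment, List.length_append, List.length_cons] at hlen
  rw [← wordSegment_append_wordSegment w (n := m + s.length + 1) (by omega) (by omega),
    wordSegment_succ w (Nat.le_add_right m _), List.append_assoc, List.singleton_append] at h
  obtain ⟨hs, ht⟩ := List.append_inj h (by simp [length_wordSegment])
  exact ⟨hs, (List.cons.inj ht).1⟩

theorem exists_wordSegment_eq_of_ne_nil (u : ℕ → List σ) (hu : ∀ k, u k ≠ []) :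
    ∃ (w : ℕ → σ) (φ : ℕ → ℕ), φ 0 = 0 ∧ StrictMono φ ∧
      ∀ k, wordSegment w (φ k) (φ (k + 1)) = u k := by
  let pre : ℕ → List σ := fun k => ((List.range k).map u).flatten
  have pre_succ : ∀ k, pre (k + 1) = pre k ++ u k := fun k => by simp [pre, List.range_succ]
  have hmono : StrictMono fun k => (pre k).length := strictMono_nat_of_lt_succ fun k => by
    simpa [pre_succ] using List.length_pos_of_ne_nil (hu k)
  have hprefix : ∀ {k k'}, k ≤ k' → pre k <+: pre k' := by
    intro k k' h
    induction k', h using Nat.le_induction with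
    | base => exact List.prefix_rfl
    | succ n _ ih => exact ih.trans (pre_succ n ▸ List.prefix_append _ _)
  let w : ℕ → σ := fun i => (pre (i + 1))[i]'(hmono.le_apply (x := i + 1))
  have hw : ∀ k i (h : i < (pre k).length), w i = (pre k)[i] := by
    intro k i h
    rcases le_total k (i + 1) with hk | hk
    · exact ((hprefix hk).getElem h).symm
    · exact (hprefix hk).getElem _
  refine ⟨w, fun k => (pre k).length, by simp [pre], hmono, fun k => ?_⟩
  refine List.ext_getElem (by simp [length_wordSegment, pre_succ]) fun i _ hi => ?_
  have hlt : (pre k).length + i < (pre (k + 1)).length := by simpa [pre_succ] using hi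
  simp only [wordSegment, List.getElem_map, List.getElem_range]
  rw [hw (k + 1) _ hlt]
  simp [pre_succ]

theorem wordSegment_zero_induction {w : ℕ → σ} {φ : ℕ → ℕ} (h0 : φ 0 = 0) (hφ : StrictMono φ)
    {p : ℕ → List σ → Prop} (nil : p 0 [])
    (append : ∀ k s, p k s → p (k + 1) (s ++ wordSegment w (φ k) (φ (k + 1)))) (k : ℕ) :
    p k (wordSegment w 0 (φ k)) := by
  induction k with
  | zero => rwa [h0, wordSegment_self]
  | succ k ih =>
    rw [← wordSegment_append_wordSegment w (Nat.zero_le _) (hφ k.lt_succ_self).le]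
    exact append k _ ih

theorem exists_prepend (u : List σ) (w : ℕ → σ) :
    ∃ w' : ℕ → σ, wordSegment w' 0 u.length = u ∧ (fun i => w' (i + u.length)) = w := by
  refine ⟨fun i => if h : i < u.length then u[i] else w (i - u.length), ?_, by simp⟩
  refine List.ext_getElem (by simp [length_wordSegment]) fun i _ h => ?_
  simp [wordSegment, h]

theorem mem_omegaPow_iff {X : Set (List σ)} (hnil : [] ∉ X)
    (happend : ∀ s, ∀ t ∈ X, s ++ t ∈ X) {w : ℕ → σ} :
    w ∈ omegaPow X ↔ ∀ N, ∃ m n, N ≤ m ∧ wordSegment w m n ∈ X := by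
  constructor
  · rintro ⟨φ, -, hφ, h⟩ N
    exact ⟨φ N, φ (N + 1), hφ.le_apply, h N⟩
  · intro h
    choose m n hNm hX using h
    have hmn : ∀ N, m N < n N := fun N => by
      have := List.length_pos_of_ne_nil (ne_of_mem_of_not_mem (hX N) hnil)
      rw [length_wordSegment] at this
      omega
    let φ : ℕ → ℕ := fun k => n^[k] 0
    have hφ : ∀ k, φ (k + 1) = n (φ k) := fun k => Function.iterate_succ_apply' n k 0
    refine ⟨φ, rfl, strictMono_nat_of_lt_succ fun k => ?_, fun k => ?_⟩
    · rw [hφ]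
      exact (hNm _).trans_lt (hmn _)
    · rw [hφ, ← wordSegment_append_wordSegment w (hNm _) (hmn _).le]
      exact happend _ _ (hX _)

/-- Tail-invariance of an ω-language: removing a finite prefix does not affect membership. -/
def ShiftInvariant (L : Set (ℕ → σ)) : Prop :=
  ∀ (w : ℕ → σ) (d : ℕ), (fun i => w (i + d)) ∈ L ↔ w ∈ L

end Words

/-! ### Killing words of a partial automaton -/

section Killing

variable {σ : Type} {S : Type*}

/-- The words on which the partial deterministic automaton with transition function `f` has no
run from any state. Runs are left folds in the `Option` monad. -/
def Kills (f : S → σ → Option S) (u : List σ) : Prop := ∀ m, u.foldlM f m = none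

/-- The infinite words in which a killing word of `f` immediately followed by the letter `y`
occurs infinitely often. This is the shape of `L_main`. -/
def killLang (f : S → σ → Option S) (y : σ) : Set (ℕ → σ) :=
  {w | ∀ N, ∃ m n, N ≤ m ∧ m ≤ n ∧ Kills f (wordSegment w m n) ∧ w n = y}

/-- The properties of a partial automaton `f` behind the lower bounds for `killLang f y`: every
state has a `y`-free synchronizing word, some `y`-free word kills, `y` can be read everywhere, and
the automaton is reduced, that is, distinct states allow distinct sets of words. -/
structure IsKillMonitor (f : S → σ → Option S) (y : σ) : Prop where
  reset : ∀ m, ∃ u : List σ, y ∉ u ∧ ∀ m', u.foldlM f m' = some m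
  kill : ∃ u, y ∉ u ∧ Kills f u
  mark : ∀ m, ∃ m', f m y = some m'
  reduced : ∀ m m', m ≠ m' → ∃ u : List σ, (u.foldlM f m).isSome ≠ (u.foldlM f m').isSome

/-- No infinite word in `L` has an infinite run in the partial automaton `f`. -/
def Misses (f : S → σ → Option S) (L : Set (ℕ → σ)) : Prop :=
  ∀ w ∈ L, ∀ m, ∃ n, (wordSegment w 0 n).foldlM f m = none

variable {f : S → σ → Option S} {y : σ}

theorem foldlM_append_of_eq_some {m m' : S} {u : List σ} (h : u.foldlM f m = some m')
    (v : List σ) : (u ++ v).foldlM f m = v.foldlM f m' := by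
  simp [List.foldlM_append, h]

theorem foldlM_append_of_eq_none {m : S} {u : List σ} (h : u.foldlM f m = none)
    (v : List σ) : (u ++ v).foldlM f m = none := by
  simp [List.foldlM_append, h]

theorem Kills.append_left {u : List σ} (h : Kills f u) (s : List σ) : Kills f (s ++ u) := by
  intro m
  cases hs : s.foldlM f m with
  | none => exact foldlM_append_of_eq_none hs u
  | some m' => rw [foldlM_append_of_eq_some hs, h]

theorem Kills.append_right {u : List σ} (h : Kills f u) (s : List σ) : Kills f (u ++ s) :=
  fun m => foldlM_append_of_eq_none (h m) s

theorem shiftInvariant_killLang : ShiftInvariant (killLang f y) := by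
  intro w d
  simp only [killLang, Set.mem_ofPred_eq, wordSegment_shift]
  constructor
  · intro h N
    obtain ⟨m, n, hN, hmn, h⟩ := h N
    exact ⟨m + d, n + d, by omega, by omega, h⟩
  · intro h N
    obtain ⟨m, n, hN, hmn, h⟩ := h (N + d)
    refine ⟨m - d, n - d, by omega, by omega, ?_⟩
    rwa [Nat.sub_add_cancel (by omega), Nat.sub_add_cancel (by omega)]

theorem mem_killLang_of_blocks {w : ℕ → σ} {φ : ℕ → ℕ} (hφ : StrictMono φ) {s t : List σ}
    (hs : Kills f s) (hw : ∀ k, wordSegment w (φ k) (φ (k + 1)) = s ++ y :: t) :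
    w ∈ killLang f y := by
  intro N
  obtain ⟨hseg, hy⟩ := wordSegment_eq_append_cons (hw N)
  exact ⟨φ N, φ N + s.length, hφ.le_apply, Nat.le_add_right _ _, hseg.symm ▸ hs, hy⟩

theorem IsKillMonitor.killLang_nonempty (hf : IsKillMonitor f y) : (killLang f y).Nonempty := by
  obtain ⟨s, -, hs⟩ := hf.kill
  obtain ⟨w, φ, -, hφ, hw⟩ := exists_wordSegment_eq_of_ne_nil (fun _ => s ++ [y]) (by simp)
  exact ⟨w, mem_killLang_of_blocks hφ hs hw⟩

theorem misses_killLang : Misses f (killLang f y) := by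
  intro w hw m₀
  obtain ⟨m, n, -, hmn, hkill, -⟩ := hw 0
  refine ⟨n, ?_⟩
  rw [← wordSegment_append_wordSegment w (Nat.zero_le m) hmn]
  exact hkill.append_left _ m₀

/-- The one-state partial automaton whose runs are the words without the letter `y`. -/
def avoidStep [DecidableEq σ] (y : σ) (_ : Unit) (l : σ) : Option Unit :=
  if l = y then none else some ()

theorem foldlM_avoidStep [DecidableEq σ] {u : List σ} (hu : y ∉ u) :
    u.foldlM (avoidStep y) () = some () := by
  induction u with
  | nil => rfl
  | cons l u ih =>
    obtain ⟨hl, hu⟩ := not_or.1 (List.mem_cons.not.1 hu)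
    simp [avoidStep, Ne.symm hl, ih hu]

theorem misses_avoidStep_killLang [DecidableEq σ] : Misses (avoidStep y) (killLang f y) := by
  intro w hw _
  obtain ⟨-, n, -, -, -, rfl⟩ := hw 0
  refine ⟨n + 1, ?_⟩
  cases h : (wordSegment w 0 n).foldlM (avoidStep (w n)) () <;>
    simp [wordSegment_succ, List.foldlM_append, h, avoidStep]

end Killing

/-! ### Total deterministic Büchi automata -/

/-- A total deterministic transition-based Büchi automaton without a designated initial state:
`sig q l` says that the transition from `q` on the letter `l` is significant. -/
structure DetBuchi (σ : Type) (R : Type*) where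
  next : R → σ → R
  sig : R → σ → Prop

namespace DetBuchi

variable {σ : Type} {R S : Type*}

/-- The state reached from `q` by reading the finite word `u`. -/
abbrev after (D : DetBuchi σ R) (q : R) (u : List σ) : R := u.foldl D.next q

/-- The run from `q` on the finite word contains a significant transition. -/
def Passes (D : DetBuchi σ R) : R → List σ → Prop
  | _, [] => False
  | q, l :: u => D.sig q l ∨ D.Passes (D.next q l) u

/-- Büchi acceptance of an infinite word from the state `q`. -/
def Accepts (D : DetBuchi σ R) (q : R) (w : ℕ → σ) : Prop :=
  ∀ N, ∃ i, N ≤ i ∧ D.sig (D.after q (wordSegment w 0 i)) (w i)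

/-- Every state of `D` accepts exactly the words in `L`. -/
def Recognises (D : DetBuchi σ R) (L : Set (ℕ → σ)) : Prop :=
  ∀ q w, w ∈ L ↔ D.Accepts q w

variable {D : DetBuchi σ R} {L : Set (ℕ → σ)}

theorem after_append (q : R) (u v : List σ) : D.after q (u ++ v) = D.after (D.after q u) v :=
  List.foldl_append

theorem passes_append {q : R} {u v : List σ} :
    D.Passes q (u ++ v) ↔ D.Passes q u ∨ D.Passes (D.after q u) v := by
  induction u generalizing q with
  | nil => simp [Passes]
  | cons l u ih => simp [Passes, ih, or_assoc]

theorem passes_wordSegment_iff {q : R} {w : ℕ → σ} {m n : ℕ} (h : m ≤ n) :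
    D.Passes (D.after q (wordSegment w 0 m)) (wordSegment w m n) ↔
      ∃ i, m ≤ i ∧ i < n ∧ D.sig (D.after q (wordSegment w 0 i)) (w i) := by
  induction n, h using Nat.le_induction with
  | base => simpa [wordSegment_self, Passes] using fun i hi hi' => absurd hi hi'.not_ge
  | succ n h ih =>
    rw [wordSegment_succ w h, passes_append, ih, ← after_append,
      wordSegment_append_wordSegment w (Nat.zero_le m) h]
    simp only [Passes, or_false]
    constructor
    · rintro (⟨i, hmi, hin, hi⟩ | hn)
      · exact ⟨i, hmi, by omega, hi⟩
      · exact ⟨n, h, by omega, hn⟩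
    · rintro ⟨i, hmi, hin, hi⟩
      rcases Nat.lt_succ_iff_lt_or_eq.1 hin with hin | rfl
      · exact Or.inl ⟨i, hmi, hin, hi⟩
      · exact Or.inr hi

theorem accepts_after_wordSegment_iff {q : R} {w : ℕ → σ} {d : ℕ} :
    D.Accepts (D.after q (wordSegment w 0 d)) (fun i => w (i + d)) ↔ D.Accepts q w := by
  simp only [Accepts, wordSegment_shift, Nat.zero_add, ← after_append,
    wordSegment_append_wordSegment w (Nat.zero_le d) (Nat.le_add_left d _)]
  constructor
  · intro h N
    obtain ⟨i, hi, hsig⟩ := h N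
    exact ⟨i + d, by omega, hsig⟩
  · intro h N
    obtain ⟨i, hi, hsig⟩ := h (N + d)
    refine ⟨i - d, by omega, ?_⟩
    rwa [Nat.sub_add_cancel (by omega)]

theorem Recognises.exists_mem_of_passes (H : D.Recognises L) (q : ℕ → R) (u : ℕ → List σ)
    (hq : ∀ k, D.after (q k) (u k) = q (k + 1)) (hu : ∀ k, D.Passes (q k) (u k)) :
    ∃ w ∈ L, ∃ φ : ℕ → ℕ, φ 0 = 0 ∧ StrictMono φ ∧
      ∀ k, wordSegment w (φ k) (φ (k + 1)) = u k := by
  obtain ⟨w, φ, h0, hφ, hw⟩ := exists_wordSegment_eq_of_ne_nil u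
    fun k hk => by simpa [hk, Passes] using hu k
  refine ⟨w, (H (q 0) w).2 fun N => ?_, φ, h0, hφ, hw⟩
  have hstate : D.after (q 0) (wordSegment w 0 (φ N)) = q N :=
    wordSegment_zero_induction (p := fun k s => D.after (q 0) s = q k) h0 hφ rfl
      (fun k s hs => by rw [after_append, hw, ← hq, ← hs]) N
  have hpass : D.Passes (D.after (q 0) (wordSegment w 0 (φ N)))
      (wordSegment w (φ N) (φ (N + 1))) := by
    rw [hstate, hw]
    exact hu N
  obtain ⟨i, hi, -, hsig⟩ := (passes_wordSegment_iff (hφ N.lt_succ_self).le).1 hpass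
  exact ⟨i, hφ.le_apply.trans hi, hsig⟩

theorem Recognises.not_invariant_of_misses (H : D.Recognises L) {f : S → σ → Option S}
    (hf : Misses f L) {I : S → R → Prop}
    (hI : ∀ m q, I m q → ∃ u m', u.foldlM f m = some m' ∧ D.Passes q u ∧ I m' (D.after q u))
    (m : S) (q : R) : ¬ I m q := by
  intro hmq
  choose! u next hrun hpass hnext using hI
  let orbit : ℕ → {a : S × R // I a.1 a.2} := fun k =>
    (fun a => ⟨(next a.1.1 a.1.2, D.after a.1.2 (u a.1.1 a.1.2)), hnext _ _ a.2⟩)^[k] ⟨(m, q), hmq⟩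
  have horbit : ∀ k, (orbit (k + 1)).1 = (next (orbit k).1.1 (orbit k).1.2,
      D.after (orbit k).1.2 (u (orbit k).1.1 (orbit k).1.2)) := fun k => by
    simp only [orbit, Function.iterate_succ_apply']
  obtain ⟨w, hw, φ, h0, hφ, hblock⟩ := H.exists_mem_of_passes (fun k => (orbit k).1.2)
    (fun k => u (orbit k).1.1 (orbit k).1.2) (fun k => by rw [horbit])
    fun k => hpass _ _ (orbit k).2
  obtain ⟨n, hdead⟩ := hf w hw m
  have halive : (wordSegment w 0 (φ n)).foldlM f m = some (orbit n).1.1 :=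
    wordSegment_zero_induction (p := fun k s => s.foldlM f m = some (orbit k).1.1) h0 hφ rfl
      (fun k s hs => by
        rw [foldlM_append_of_eq_some hs, hblock, hrun _ _ (orbit k).2, horbit]) n
  rw [← wordSegment_append_wordSegment w (Nat.zero_le n) hφ.le_apply,
    foldlM_append_of_eq_none hdead] at halive
  exact Option.some_ne_none _ halive.symm

theorem Recognises.not_passes_of_loop (H : D.Recognises L) {f : S → σ → Option S}
    (hf : Misses f L) {m : S} {q : R} {u : List σ} (hm : u.foldlM f m = some m)
    (hq : D.after q u = q) : ¬ D.Passes q u := fun hu =>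
  H.not_invariant_of_misses hf (I := fun m' q' => m' = m ∧ q' = q)
    (by rintro _ _ ⟨rfl, rfl⟩; exact ⟨u, _, hm, hu, rfl, hq⟩) m q ⟨rfl, rfl⟩

section KillLang

variable {f : S → σ → Option S} {y : σ}

theorem Recognises.not_invariant_of_notMem (H : D.Recognises (killLang f y)) {I : R → Prop}
    (hI : ∀ q, I q → ∃ u, y ∉ u ∧ D.Passes q u ∧ I (D.after q u)) (q : R) : ¬ I q := by
  classical
  refine H.not_invariant_of_misses misses_avoidStep_killLang (I := fun _ => I) (fun _ q hq => ?_)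
    () q
  obtain ⟨u, hy, hu, hu'⟩ := hI q hq
  exact ⟨u, (), foldlM_avoidStep hy, hu, hu'⟩

theorem Recognises.passes_of_loop (H : D.Recognises (killLang f y)) {q : R} {s t : List σ}
    (hloop : D.after q (s ++ y :: t) = q) (hs : Kills f s) : D.Passes q (s ++ y :: t) := by
  by_contra hquiet
  obtain ⟨w, φ, h0, hφ, hw⟩ := exists_wordSegment_eq_of_ne_nil (fun _ => s ++ y :: t) (by simp)
  obtain ⟨i, -, hi⟩ := (H q w).1 (mem_killLang_of_blocks hφ hs hw) 0
  have hprefix := wordSegment_zero_induction (w := w)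
    (p := fun _ s => D.after q s = q ∧ ¬ D.Passes q s) h0 hφ ⟨rfl, id⟩
    (fun k s hs => by rw [after_append, passes_append, hw, hs.1]; simp_all) (i + 1)
  exact hprefix.2 ((passes_wordSegment_iff (m := 0) (Nat.zero_le _)).2
    ⟨i, Nat.zero_le _, hφ.le_apply, hi⟩)

end KillLang

/-! ### Cores -/

section Bottom

variable {f : S → σ → Option S}

/-- Reachability in the product of the partial automaton `f` with `D`. -/
def Reaches (D : DetBuchi σ R) (f : S → σ → Option S) (a b : S × R) : Prop :=
  ∃ u : List σ, u.foldlM f a.1 = some b.1 ∧ D.after a.2 u = b.2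

theorem Reaches.refl (a : S × R) : D.Reaches f a a := ⟨[], rfl, rfl⟩

theorem Reaches.trans {a b c : S × R} (hab : D.Reaches f a b) (hbc : D.Reaches f b c) :
    D.Reaches f a c := by
  obtain ⟨u, hu, hu'⟩ := hab
  obtain ⟨v, hv, hv'⟩ := hbc
  exact ⟨u ++ v, by rw [foldlM_append_of_eq_some hu, hv], by rw [after_append, hu', hv']⟩

/-- A bottom strongly connected component of the product of the partial automaton `f` with `D`. -/
structure IsBottom (D : DetBuchi σ R) (f : S → σ → Option S) (P : Set (S × R)) : Prop where
  nonempty : P.Nonempty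
  closed : ∀ {a b}, a ∈ P → D.Reaches f a b → b ∈ P
  connected : ∀ {a b}, a ∈ P → b ∈ P → D.Reaches f a b

theorem exists_isBottom [Finite S] [Finite R] (a : S × R) :
    ∃ P, D.IsBottom f P ∧ ∀ b ∈ P, D.Reaches f a b := by
  let : Preorder (S × R) :=
    { le := D.Reaches f, le_refl := .refl, le_trans := fun _ _ _ => .trans }
  obtain ⟨b, hab, hb⟩ := Finite.exists_le_maximal (p := fun _ : S × R => True) (a := a) trivial
  exact ⟨{c | D.Reaches f b c}, ⟨⟨b, .refl b⟩, .trans,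
    fun hc hd => (hb.le_of_ge trivial hc).trans hd⟩, fun _ => hab.trans⟩

theorem IsBottom.run {P : Set (S × R)} (B : D.IsBottom f P) {m m' : S} {k : R} {u : List σ}
    (h : (m, k) ∈ P) (hu : u.foldlM f m = some m') : (m', D.after k u) ∈ P :=
  B.closed h ⟨u, hu, rfl⟩

/-- The states of `D` that occur in a set of states of a product with `D`. -/
def statesOf (P : Set (S × R)) : Set R := {k | ∃ m, (m, k) ∈ P}

/-- From `n`, words without the letter `y` do not lead into `K`. -/
def Away (D : DetBuchi σ R) (y : σ) (K : Set R) (n : R) : Prop :=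
  ∀ u : List σ, y ∉ u → D.after n u ∉ K

theorem Away.notMem {y : σ} {K : Set R} {n : R} (h : D.Away y K n) : n ∉ K := h [] (by simp)

/-- A bottom component of the product of `f` with `D` in which `D` takes no significant
transition. For `L_main` it contains at least one copy of every state of the monitor. -/
structure IsCore (D : DetBuchi σ R) (f : S → σ → Option S) (P : Set (S × R)) : Prop
    extends D.IsBottom f P where
  safe : ∀ {m k m'} {u : List σ}, (m, k) ∈ P → u.foldlM f m = some m' → ¬ D.Passes k u

theorem Recognises.exists_isCore [Finite S] [Finite R] [Nonempty S] [Nonempty R]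
    (H : D.Recognises L) (hf : Misses f L) : ∃ P, D.IsCore f P := by
  obtain ⟨a, ha⟩ : ∃ a : S × R, ∀ (u : List σ) m', u.foldlM f a.1 = some m' → ¬ D.Passes a.2 u := by
    by_contra! h
    refine H.not_invariant_of_misses hf (I := fun _ _ => True) (fun m q _ => ?_)
      (Classical.arbitrary S) (Classical.arbitrary R) trivial
    obtain ⟨u, m', hu, hpass⟩ := h (m, q)
    exact ⟨u, m', hu, hpass, trivial⟩
  obtain ⟨P, B, hP⟩ := exists_isBottom (D := D) (f := f) a
  refine ⟨P, B, fun {m k m' u} hm hu hpass => ?_⟩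
  obtain ⟨v, hv, hv'⟩ := hP _ hm
  refine ha (v ++ u) m' (by rw [foldlM_append_of_eq_some hv, hu]) (passes_append.2 (Or.inr ?_))
  rwa [hv']

end Bottom

namespace IsCore

variable {f : S → σ → Option S} {y : σ} {P : Set (S × R)}

theorem exists_state (C : D.IsCore f P) (hf : IsKillMonitor f y) (m : S) : ∃ k, (m, k) ∈ P := by
  obtain ⟨⟨m₀, k⟩, hk⟩ := C.nonempty
  obtain ⟨u, -, hu⟩ := hf.reset m
  exact ⟨_, C.run hk (hu m₀)⟩

/-- Such a word closes up to a loop that starts by synchronizing to `m`, so that the loop kills and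
then reads `y`; the other parts of the loop stay in the core. -/
theorem passes (C : D.IsCore f P) (hf : IsKillMonitor f y) (H : D.Recognises (killLang f y))
    {m : S} {k : R} {u : List σ} (hk : (m, k) ∈ P) (hdead : u.foldlM f m = none)
    (hreturn : D.after k u ∈ statesOf P) : D.Passes k u := by
  obtain ⟨m', hk'⟩ := hreturn
  obtain ⟨s, -, hs⟩ := hf.reset m
  obtain ⟨s', hs', hsk⟩ := C.connected (C.run hk (hs m)) hk
  obtain ⟨m'', hy⟩ := hf.mark m'
  have hy : [y].foldlM f m' = some m'' := by simpa using hy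
  obtain ⟨v, hv, hvk⟩ := C.connected (C.run hk' hy) hk
  have hss : ∀ m₀, (s ++ s').foldlM f m₀ = some m := fun m₀ => by
    rw [foldlM_append_of_eq_some (hs m₀), hs']
  have hssk : D.after k (s ++ s') = k := by rw [after_append, hsk]
  have hyv : (y :: v).foldlM f m' = some m := by
    rw [← List.singleton_append, foldlM_append_of_eq_some hy, hv]
  have hyvk : D.after (D.after k u) (y :: v) = k := hvk
  have hkill : Kills f (s ++ s' ++ u) := fun m₀ => by
    rw [foldlM_append_of_eq_some (hss m₀), hdead]
  have hloop := H.passes_of_loop (q := k) (t := v)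
    (by rw [after_append, after_append, hssk, hyvk]) hkill
  rw [passes_append, passes_append, after_append k (s ++ s'), hssk] at hloop
  rcases hloop with (hloop | hloop) | hloop
  · exact absurd hloop (C.safe hk (hss m))
  · exact hloop
  · exact absurd hloop (C.safe hk' hyv)

theorem unique (C : D.IsCore f P) (hf : IsKillMonitor f y) (H : D.Recognises (killLang f y))
    {m m' : S} {k : R} (hm : (m, k) ∈ P) (hm' : (m', k) ∈ P) : m = m' := by
  have key : ∀ {m m'} {u : List σ}, (m, k) ∈ P → (m', k) ∈ P → u.foldlM f m = none →
      u.foldlM f m' = none := by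
    intro m m' u hm hm' hdead
    by_contra hlive
    obtain ⟨m₁, hm₁⟩ := Option.ne_none_iff_exists'.1 hlive
    exact C.safe hm' hm₁ (C.passes hf H hm hdead ⟨m₁, C.run hm' hm₁⟩)
  by_contra hne
  obtain ⟨u, hu⟩ := hf.reduced m m' hne
  refine hu (Bool.eq_iff_iff.2 ?_)
  simp only [Option.isSome_iff_ne_none, ne_eq]
  exact not_congr ⟨key hm hm', key hm' hm⟩

theorem injective (C : D.IsCore f P) (hf : IsKillMonitor f y) (H : D.Recognises (killLang f y))
    {κ : S → R} (hκ : ∀ m, (m, κ m) ∈ P) : Function.Injective κ := fun m m' h =>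
  C.unique hf H (hκ m) (h ▸ hκ m')

theorem exists_away (C : D.IsCore f P) (hf : IsKillMonitor f y)
    (H : D.Recognises (killLang f y)) : ∃ n, D.Away y (statesOf P) n := by
  by_contra! h
  obtain ⟨⟨m, k⟩, hk⟩ := C.nonempty
  refine H.not_invariant_of_notMem (I := (· ∈ statesOf P)) ?_ k ⟨m, hk⟩
  rintro k ⟨m, hk⟩
  obtain ⟨u, hyu, hu⟩ := hf.kill
  obtain ⟨v, hyv, hv⟩ : ∃ v, y ∉ v ∧ D.after (D.after k u) v ∈ statesOf P := by
    simpa [Away] using h (D.after k u)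
  rw [← after_append] at hv
  exact ⟨u ++ v, by simp [hyu, hyv], C.passes hf H hk (hu.append_right v m) hv, hv⟩

/-- If each of the states `e x` had a second copy, these, one copy of each state of `f` and a state
outside the core would be too many states. -/
theorem exists_unique_copy {T : Type*} [Fintype S] [Fintype R] [Fintype T] (C : D.IsCore f P)
    (hf : IsKillMonitor f y) (H : D.Recognises (killLang f y)) {e : T → S}
    (he : Function.Injective e) (hcard : Fintype.card R ≤ Fintype.card S + Fintype.card T) :
    ∃ x, ∃! k, (e x, k) ∈ P := by
  by_contra! h
  choose κ hκ using C.exists_state hf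
  have hsecond : ∀ x, ∃ k, (e x, k) ∈ P ∧ k ≠ κ (e x) := fun x => by
    by_contra! hx
    exact h x ⟨κ (e x), hκ _, hx⟩
  choose g hg hgκ using hsecond
  have hginj : Function.Injective g := fun x x' hxx =>
    he (C.unique hf H (hg x) (hxx ▸ hg x'))
  have hdisjoint : ∀ m x, κ m ≠ g x := fun m x hmx => by
    obtain rfl := C.unique hf H (hκ m) (hmx ▸ hg x)
    exact hgκ x hmx.symm
  obtain ⟨n, hn⟩ := C.exists_away hf H
  have hlt := Fintype.card_lt_of_injective_of_notMem _
    ((C.injective hf H hκ).sumElim hginj hdisjoint) (b := n) (by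
      rintro ⟨m | x, rfl⟩
      · exact hn.notMem ⟨m, hκ m⟩
      · exact hn.notMem ⟨e x, hg x⟩)
  rw [Fintype.card_sum] at hlt
  omega

theorem away_of_unique (C : D.IsCore f P) (hf : IsKillMonitor f y)
    (H : D.Recognises (killLang f y)) {m : S} {k : R} (hk : (m, k) ∈ P)
    (huniq : ∀ k', (m, k') ∈ P → k' = k) {u : List σ} (hyu : y ∉ u)
    (hdead : u.foldlM f m = none) : D.Away y (statesOf P) (D.after k u) := by
  rintro v hyv ⟨m', hm'⟩
  rw [← after_append] at hm'
  obtain ⟨s, hys, hs⟩ := hf.reset m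
  have hpass := C.passes hf H hk (foldlM_append_of_eq_none hdead v) ⟨m', hm'⟩
  have hloop : D.after k (u ++ v ++ s) = k := by
    rw [after_append]
    exact huniq _ (C.run hm' (hs m'))
  refine H.not_invariant_of_notMem (I := (· = k)) ?_ k rfl
  rintro _ rfl
  exact ⟨u ++ v ++ s, by simp [hyu, hyv, hys], passes_append.2 (Or.inl hpass), hloop⟩

end IsCore

end DetBuchi

/-! ### The scanning automaton of the classifier -/

/-- The non-final states of the classifier. -/
inductive Scan : Type
  | p | q | t | s | r
deriving DecidableEq

instance : Fintype Scan := ⟨{.p, .q, .t, .s, .r}, fun x => by cases x <;> decide⟩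

/-- What a letter does to a scan of an infinite word: it completes a word of some `L_i`, it is the
reset letter `r_i`, or neither. -/
inductive Event : Type
  | silent
  | label (i : Fin 6)
  | reset (i : Fin 6)
deriving DecidableEq

theorem card_scan : Fintype.card Scan = 5 := rfl

namespace Scan

/-- The inclusion of the non-final states into the states of the classifier. -/
def toCSt : Scan → CSt
  | p => .p
  | q => .q
  | t => .t
  | s => .s
  | r => .r

/-- The scan state to resume in when the classifier has entered the given state: after
recognising a word it restarts. -/
def ofCSt : CSt → Scan
  | .p => p
  | .q => q
  | .t => t
  | .s => s
  | .r => r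
  | .ell _ => p

/-- The event caused by a letter. -/
def event (x : Scan) : Al → Event
  | .res i => .reset i
  | l => match clStep x.toCSt l with
    | some (.ell i) => .label i
    | _ => .silent

/-- The scan state after a letter; the scan restarts after a reset letter. -/
def next (x : Scan) (l : Al) : Scan := (clStep x.toCSt l).elim p ofCSt

/-- The labels `i` such that the digit `i` completes a word of `L_i`. -/
def labels (x : Scan) : Finset (Fin 6) := {i | x.event (.num i) = .label i}

/-- The simulation order of the scan states: `x ≤ x'` if every continuation of a word scanned to
`x` that completes a word of `L_i` also does so after a word scanned to `x'`. -/
def Le (x x' : Scan) : Prop := x = p ∨ x = x' ∨ (x = t ∧ x' = s)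

instance : DecidableRel Le := fun x z => inferInstanceAs (Decidable (x = p ∨ x = z ∨ _))

/-- A word leading from `p` to the given scan state without events. -/
def access : Scan → List Al
  | p => []
  | q => [.a]
  | t => [.c]
  | s => [.a, .c]
  | r => [.a, .b]

end Scan

/-- The scan as a partial automaton that stops at the first label or reset letter. -/
def quietStep (x : Scan) (l : Al) : Option Scan :=
  if x.event l = .silent then some (x.next l) else none

theorem clStep_toCSt (x : Scan) (l : Al) :
    clStep x.toCSt l = match x.event l with
      | .silent => some (x.next l).toCSt
      | .label i => some (.ell i)
      | .reset _ => none := by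
  revert x l
  decide

theorem eq_num_of_event_eq_label {x : Scan} {l : Al} {i : Fin 6} (h : x.event l = .label i) :
    l = .num i := by
  revert x l i
  decide

theorem eq_res_of_event_eq_reset {x : Scan} {l : Al} {i : Fin 6} (h : x.event l = .reset i) :
    l = .res i := by
  revert x l i
  decide

theorem foldlM_quietStep_cons_eq_some_iff {x x' : Scan} {l : Al} {g : List Al} :
    (l :: g).foldlM quietStep x = some x' ↔
      x.event l = .silent ∧ g.foldlM quietStep (x.next l) = some x' := by
  by_cases hl : x.event l = .silent <;> simp [quietStep, hl]

theorem next_num (x : Scan) (i : Fin 6) : x.next (.num i) = .p := by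
  revert x i
  decide

theorem mem_labels {x : Scan} {i : Fin 6} : i ∈ x.labels ↔ x.event (.num i) = .label i := by
  simp [Scan.labels]

theorem event_num_of_notMem {x : Scan} {i : Fin 6} (h : i ∉ x.labels) :
    x.event (.num i) = .silent := by
  revert x i
  decide

theorem Scan.Le.event_num {x x' : Scan} (h : x.Le x') {i : Fin 6}
    (hx : x.event (.num i) = .label i) : x'.event (.num i) = .label i := by
  revert x x' i
  decide

theorem Scan.Le.next {x x' : Scan} (h : x.Le x') {l : Al} (hx : x.event l = .silent) :
    (x.next l).Le (x'.next l) := by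
  revert x x' l
  decide

theorem foldlM_quietStep_access (x : Scan) : x.access.foldlM quietStep .p = some x := by
  revert x
  decide

theorem quietStep_y (x : Scan) : quietStep x .y = some .p := by
  revert x
  decide

theorem exists_separating {x x' : Scan} (h : x ≠ x') :
    ∃ v x₁ x₁', List.foldlM quietStep x v = some x₁ ∧ List.foldlM quietStep x' v = some x₁' ∧
      (1 < (x₁.labels \ x₁'.labels).card ∨ 1 < (x₁'.labels \ x₁.labels).card) := by
  have key : ∀ x x', x ≠ x' → ∃ v ∈ [[], [Al.b]], ∃ x₁ x₁',
      List.foldlM quietStep x v = some x₁ ∧ List.foldlM quietStep x' v = some x₁' ∧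
      (1 < (x₁.labels \ x₁'.labels).card ∨ 1 < (x₁'.labels \ x₁.labels).card) := by
    decide
  obtain ⟨v, -, hv⟩ := key x x' h
  exact ⟨v, hv⟩

/-! ### The languages `L_i` and the monitor of `L_main` -/

theorem clRun_append (x : CSt) (u v : List Al) :
    clRun x (u ++ v) = (clRun x u).bind (clRun · v) := by
  induction u generalizing x with
  | nil => rfl
  | cons l u ih =>
    simp only [List.cons_append, clRun]
    cases clStep x l with
    | none => rfl
    | some x' => exact ih x'

theorem clRun_ell_eq_some_iff {i : Fin 6} {u : List Al} {x : CSt} :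
    clRun (.ell i) u = some x ↔ u = [] ∧ x = .ell i := by
  cases u <;> simp [clRun, clStep, eq_comm]

theorem clRun_toCSt_eq_ell_iff {x : Scan} {u : List Al} {i : Fin 6} :
    clRun x.toCSt u = some (.ell i) ↔
      ∃ g x', g.foldlM quietStep x = some x' ∧ x'.event (.num i) = .label i ∧
        u = g ++ [.num i] := by
  constructor
  · intro h
    induction u generalizing x with
    | nil => cases x <;> cases h
    | cons l u ih =>
      rw [clRun, clStep_toCSt] at h
      cases hl : x.event l with
      | silent =>
        simp only [hl] at h
        obtain ⟨g, x', hg, hi, rfl⟩ := ih h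
        exact ⟨l :: g, x', foldlM_quietStep_cons_eq_some_iff.2 ⟨hl, hg⟩, hi, rfl⟩
      | label j =>
        simp only [hl] at h
        obtain ⟨rfl, hij⟩ := clRun_ell_eq_some_iff.1 h
        obtain rfl := CSt.ell.inj hij
        obtain rfl := eq_num_of_event_eq_label hl
        exact ⟨[], x, rfl, hl, rfl⟩
      | reset j => simp [hl] at h
  · rintro ⟨g, x', hg, hi, rfl⟩
    induction g generalizing x with
    | nil =>
      obtain rfl : x = x' := Option.some.inj hg
      simp [clRun, clStep_toCSt, hi]
    | cons l g ih =>
      obtain ⟨hl, hg⟩ := foldlM_quietStep_cons_eq_some_iff.1 hg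
      simp [clRun, clStep_toCSt, hl, ih hg]

theorem mem_Lcl_iff {u : List Al} {i : Fin 6} :
    u ∈ Lcl i ↔ ∃ g x, g.foldlM quietStep .p = some x ∧ x.event (.num i) = .label i ∧
      u = g ++ [.num i] :=
  clRun_toCSt_eq_ell_iff (x := .p)

theorem eq_of_mem_Lcl_of_prefix {u v s : List Al} {i j : Fin 6} (hu : u ∈ Lcl i) (hv : v ∈ Lcl j)
    (hus : u <+: s) (hvs : v <+: s) : i = j := by
  have key : ∀ {u v : List Al} {i j : Fin 6}, u ∈ Lcl i → v ∈ Lcl j → u <+: v → i = j := by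
    rintro u v i j hu hv ⟨t, rfl⟩
    rw [Lcl, Set.mem_ofPred_eq] at hu hv
    rw [clRun_append, hu, Option.bind_some, clRun_ell_eq_some_iff] at hv
    exact (CSt.ell.inj hv.2).symm
  rcases List.prefix_or_prefix_of_prefix hus hvs with h | h
  · exact key hu hv h
  · exact (key hv hu h).symm

/-- The control part of the monitor of `L_main`: the index of the last label or reset letter, and
whether repeating this label completes a word of `(L_i ∪ {r_i}) L_j L_j` with `i ≠ j`. -/
structure Mode where
  label : Fin 6
  armed : Bool
deriving DecidableEq, Fintype

/-- The effect of an event on the mode; there is none after a word of `(L_i ∪ {r_i}) L_j L_j`. -/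
def Mode.update (μ : Mode) : Event → Option Mode
  | .silent => some μ
  | .label i => if i ≠ μ.label then some ⟨i, true⟩ else if μ.armed then none else some μ
  | .reset i => some ⟨i, false⟩

/-- The states of the monitor of `L_main`. -/
abbrev Track : Type := Mode × Scan

/-- The monitor of `L_main`, a partial automaton that has no run exactly on the words with a factor
in `(L_i ∪ {r_i}) L_j L_j` for some `i ≠ j`; see `hasRepetition_iff_kills`. -/
def trackStep (m : Track) (l : Al) : Option Track :=
  (m.1.update (m.2.event l)).map (·, m.2.next l)

theorem card_track : Fintype.card Track = 60 := rfl

theorem foldlM_trackStep_of_quiet {g : List Al} {x x' : Scan}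
    (hg : g.foldlM quietStep x = some x') (μ : Mode) :
    g.foldlM trackStep (μ, x) = some (μ, x') := by
  induction g generalizing x with
  | nil => simpa using hg
  | cons l g ih =>
    obtain ⟨hl, hg⟩ := foldlM_quietStep_cons_eq_some_iff.1 hg
    simp [trackStep, Mode.update, hl, ih hg]

theorem trackStep_y (m : Track) : trackStep m .y = some (m.1, .p) := by
  simpa using foldlM_trackStep_of_quiet (g := [.y]) (by simpa using quietStep_y m.2) m.1

theorem trackStep_num_of_event {x : Scan} {i : Fin 6} (h : x.event (.num i) = .label i)
    (μ : Mode) : trackStep (μ, x) (.num i) = (μ.update (.label i)).map (·, .p) := by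
  simp [trackStep, h, next_num]

theorem foldlM_trackStep_of_mem_Lcl {v : List Al} {i : Fin 6} (hv : v ∈ Lcl i) (μ : Mode) :
    v.foldlM trackStep (μ, .p) = (μ.update (.label i)).map (·, .p) := by
  obtain ⟨g, x, hg, hi, rfl⟩ := mem_Lcl_iff.1 hv
  rw [foldlM_append_of_eq_some (foldlM_trackStep_of_quiet hg μ)]
  simp [trackStep_num_of_event hi]

theorem le_of_foldlM_trackStep {g : List Al} {x x' y : Scan} {μ : Mode} {m : Track}
    (hxy : x.Le y) (hx : g.foldlM quietStep x = some x')
    (hy : g.foldlM trackStep (μ, y) = some m) : x'.Le m.2 := by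
  induction g generalizing x y μ with
  | nil =>
    obtain rfl : x = x' := Option.some.inj hx
    obtain rfl : (μ, y) = m := Option.some.inj hy
    exact hxy
  | cons l g ih =>
    obtain ⟨hl, hx⟩ := foldlM_quietStep_cons_eq_some_iff.1 hx
    obtain ⟨m', hstep, hy⟩ := Option.bind_eq_some_iff.1 (List.foldlM_cons.symm.trans hy)
    obtain ⟨μ', -, rfl⟩ := Option.map_eq_some_iff.1 hstep
    exact ih (hxy.next hl) hx hy

theorem Mode.label_of_update_label {μ μ' : Mode} {i : Fin 6}
    (h : μ.update (.label i) = some μ') : μ'.label = i := by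
  revert μ μ' i
  decide

theorem foldlM_trackStep_eq_some_of_mem_Lcl {v : List Al} {i : Fin 6} (hv : v ∈ Lcl i)
    {m m' : Track} (h : v.foldlM trackStep m = some m') : m'.1.label = i ∧ m'.2 = .p := by
  obtain ⟨g, x, hg, hi, rfl⟩ := mem_Lcl_iff.1 hv
  cases hm : g.foldlM trackStep m with
  | none => simp [foldlM_append_of_eq_none hm] at h
  | some m₁ =>
    have hle : x.Le m₁.2 := le_of_foldlM_trackStep (Or.inl rfl) hg hm
    rw [foldlM_append_of_eq_some hm] at h
    have h : trackStep m₁ (.num i) = some m' := by simpa using h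
    rw [trackStep_num_of_event (x := m₁.2) (hle.event_num hi), Option.map_eq_some_iff] at h
    obtain ⟨μ, hμ, rfl⟩ := h
    exact ⟨Mode.label_of_update_label hμ, rfl⟩

theorem trackStep_res (m : Track) (i : Fin 6) : trackStep m (.res i) = some (⟨i, false⟩, .p) := by
  obtain ⟨μ, x⟩ := m
  cases x <;> rfl

/-- `v` is a word of `L_i` or the reset letter `r_i`. -/
def Announces (i : Fin 6) (v : List Al) : Prop := v ∈ Lcl i ∨ v = [.res i]

/-- `u` has a factor in `(L_i ∪ {r_i}) L_j L_j` for some `i ≠ j`. -/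
def HasRepetition (u : List Al) : Prop :=
  ∃ i j, i ≠ j ∧ ∃ s v₁ v₂ v₃ z, Announces i v₁ ∧ v₂ ∈ Lcl j ∧ v₃ ∈ Lcl j ∧
    u = s ++ v₁ ++ v₂ ++ v₃ ++ z

theorem HasRepetition.append_right {u : List Al} (h : HasRepetition u) (z : List Al) :
    HasRepetition (u ++ z) := by
  obtain ⟨i, j, hij, s, v₁, v₂, v₃, z', h₁, h₂, h₃, rfl⟩ := h
  exact ⟨i, j, hij, s, v₁, v₂, v₃, z' ++ z, h₁, h₂, h₃, by simp⟩

theorem Announces.foldlM_eq_some {i : Fin 6} {v : List Al} (hv : Announces i v) {m m' : Track}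
    (h : v.foldlM trackStep m = some m') : m'.1.label = i ∧ m'.2 = .p := by
  rcases hv with hv | rfl
  · exact foldlM_trackStep_eq_some_of_mem_Lcl hv h
  · obtain rfl : (⟨i, false⟩, .p) = m' := by simpa [trackStep_res] using h
    exact ⟨rfl, rfl⟩

theorem HasRepetition.kills {u : List Al} (h : HasRepetition u) : Kills trackStep u := by
  obtain ⟨i, j, hij, s, v₁, v₂, v₃, z, h₁, h₂, h₃, rfl⟩ := h
  have hkill : Kills trackStep (v₁ ++ v₂ ++ v₃) := fun m => by
    cases hm : v₁.foldlM trackStep m with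
    | none => rw [List.append_assoc, foldlM_append_of_eq_none hm]
    | some m' =>
      obtain ⟨⟨i', a⟩, x⟩ := m'
      obtain ⟨rfl, rfl⟩ := h₁.foldlM_eq_some hm
      have harm : v₂.foldlM trackStep (⟨i', a⟩, .p) = some (⟨j, true⟩, .p) := by
        simp [foldlM_trackStep_of_mem_Lcl h₂, Mode.update, hij.symm]
      rw [List.append_assoc, foldlM_append_of_eq_some hm, foldlM_append_of_eq_some harm]
      simp [foldlM_trackStep_of_mem_Lcl h₃, Mode.update]
  rw [List.append_assoc s, List.append_assoc s]
  exact (hkill.append_left s).append_right z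

/-- A decomposition of the word `u` that accounts for the monitor being in the state `m`. -/
def Explains (u : List Al) (m : Track) : Prop :=
  ∃ s v g, Announces m.1.label v ∧ g.foldlM quietStep .p = some m.2 ∧ u = s ++ v ++ g ∧
    (m.1.armed = true → v ∈ Lcl m.1.label ∧
      ∃ i ≠ m.1.label, ∃ s' v', Announces i v' ∧ s = s' ++ v')

theorem Explains.step {u : List Al} {m : Track} (h : Explains u m) (l : Al) :
    (∃ m', trackStep m l = some m' ∧ Explains (u ++ [l]) m') ∨ HasRepetition (u ++ [l]) := by
  obtain ⟨⟨i, armed⟩, x⟩ := m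
  obtain ⟨s, v, g, hv, hg, rfl, harmed⟩ := h
  cases hl : x.event l with
  | silent =>
    have hgl : (g ++ [l]).foldlM quietStep .p = some (x.next l) := by
      simp [foldlM_append_of_eq_some hg, quietStep, hl]
    exact Or.inl ⟨(⟨i, armed⟩, x.next l), by simp [trackStep, hl, Mode.update], s, v, g ++ [l], hv,
      hgl, by simp, harmed⟩
  | reset j =>
    obtain rfl := eq_res_of_event_eq_reset hl
    exact Or.inl ⟨_, trackStep_res _ j, s ++ v ++ g, [.res j], [], Or.inr rfl, rfl, by simp,
      by simp⟩
  | label j =>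
    obtain rfl := eq_num_of_event_eq_label hl
    have hgj : g ++ [.num j] ∈ Lcl j := mem_Lcl_iff.2 ⟨g, x, hg, hl, rfl⟩
    have hstep := trackStep_num_of_event hl ⟨i, armed⟩
    by_cases hij : j = i
    · subst hij
      cases armed with
      | true =>
        obtain ⟨hvj, i, hi, s', v', hv', rfl⟩ := harmed rfl
        exact Or.inr ⟨i, j, hi, s', v', v, g ++ [.num j], [], hv', hvj, hgj, by simp⟩
      | false =>
        exact Or.inl ⟨(⟨j, false⟩, .p), by simpa [Mode.update] using hstep, s ++ v, g ++ [.num j],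
          [], Or.inl hgj, rfl, by simp, by simp⟩
    · exact Or.inl ⟨(⟨j, true⟩, .p), by simpa [Mode.update, hij] using hstep, s ++ v,
        g ++ [.num j], [], Or.inl hgj, rfl, by simp, fun _ => ⟨hgj, i, Ne.symm hij, s, v, hv, rfl⟩⟩

theorem Explains.hasRepetition {u s : List Al} {m : Track} (h : Explains u m)
    (hdead : s.foldlM trackStep m = none) : HasRepetition (u ++ s) := by
  induction s generalizing u m with
  | nil => simp at hdead
  | cons l s ih =>
    rw [← List.singleton_append, ← List.append_assoc]
    rcases h.step l with ⟨m', hm', h'⟩ | h'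
    · exact ih h' (by simpa [hm'] using hdead)
    · exact h'.append_right s

theorem hasRepetition_or_of_res_cons {i : Fin 6} {s : List Al} (h : HasRepetition (.res i :: s)) :
    HasRepetition s ∨ ∃ j ≠ i, ∃ v ∈ Lcl j, v <+: s := by
  obtain ⟨i', j, hij, t, v₁, v₂, v₃, z, h₁, h₂, h₃, heq⟩ := h
  cases t with
  | cons l t =>
    obtain ⟨-, rfl⟩ := List.cons.inj heq
    exact Or.inl ⟨i', j, hij, t, v₁, v₂, v₃, z, h₁, h₂, h₃, rfl⟩
  | nil =>
    rcases h₁ with h₁ | rfl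
    · cases v₁ with
      | nil => cases h₁
      | cons l v₁ =>
        obtain ⟨rfl, -⟩ := List.cons.inj heq
        cases h₁
    · obtain ⟨hi, rfl⟩ := List.cons.inj heq
      obtain rfl := Al.res.inj hi
      exact Or.inr ⟨j, hij.symm, v₂, h₂, v₃ ++ z, by simp⟩

/-- A word killing the monitor has a repetition after each reset letter. If the repetition started
with this reset letter, the next label would differ from its index, whichever letter it is. -/
theorem hasRepetition_iff_kills {s : List Al} : HasRepetition s ↔ Kills trackStep s := by
  refine ⟨HasRepetition.kills, fun hkill => ?_⟩
  have hres : ∀ i, HasRepetition (.res i :: s) := fun i =>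
    Explains.hasRepetition (u := [.res i]) (m := (⟨i, false⟩, .p))
      ⟨[], [.res i], [], Or.inr rfl, rfl, rfl, by simp⟩ (hkill _)
  rcases hasRepetition_or_of_res_cons (hres 0) with h | ⟨j, -, v, hv, hvs⟩
  · exact h
  rcases hasRepetition_or_of_res_cons (hres j) with h | ⟨k, hkj, w, hw, hws⟩
  · exact h
  exact absurd (eq_of_mem_Lcl_of_prefix hw hv hws hvs) hkj

theorem LMain_eq_killLang : LMain = killLang trackStep .y := by
  ext w
  rw [LMain, mem_omegaPow_iff]
  · refine forall_congr' fun N => ?_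
    constructor
    · rintro ⟨m, n, hNm, i, j, hij, s, v₁, v₂, v₃, z, h₁, h₂, h₃, heq⟩
      obtain ⟨hseg, hy⟩ := wordSegment_eq_append_cons heq
      exact ⟨m, _, hNm, Nat.le_add_right _ _, hasRepetition_iff_kills.1
        ⟨i, j, hij, s, v₁, v₂, v₃, z, h₁, h₂, h₃, hseg⟩, hy⟩
    · rintro ⟨m, n, hNm, hmn, hkill, hy⟩
      obtain ⟨i, j, hij, s, v₁, v₂, v₃, z, h₁, h₂, h₃, heq⟩ := hasRepetition_iff_kills.2 hkill
      refine ⟨m, n + 1, hNm, i, j, hij, s, v₁, v₂, v₃, z, h₁, h₂, h₃, ?_⟩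
      rw [wordSegment_succ w hmn, heq, hy]
  · simp
  · rintro s _ ⟨i, j, hij, u, v₁, v₂, v₃, z, h₁, h₂, h₃, rfl⟩
    exact ⟨i, j, hij, s ++ u, v₁, v₂, v₃, z, h₁, h₂, h₃, by simp⟩

/-- A word of `L_i` that the scan recognises from every state. -/
def labelWord (i : Fin 6) : List Al := if i.val < 3 then [.c, .num i] else [.a, .b, .num i]

theorem foldlM_labelWord (m : Track) (i : Fin 6) :
    (labelWord i).foldlM trackStep m = (m.1.update (.label i)).map (·, .p) := by
  have key : ∀ x i, ∃ g x', labelWord i = g ++ [.num i] ∧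
      List.foldlM quietStep x g = some x' ∧ x'.event (.num i) = .label i := by
    intro x i
    by_cases hi : i.val < 3
    · refine ⟨[.c], x.next .c, by simp [labelWord, hi], ?_⟩
      revert x i
      decide
    · refine ⟨[.a, .b], .r, by simp [labelWord, hi], ?_⟩
      revert x i
      decide
  obtain ⟨g, x', hg, hquiet, hi⟩ := key m.2 i
  rw [hg, foldlM_append_of_eq_some (foldlM_trackStep_of_quiet hquiet m.1)]
  simp [trackStep_num_of_event hi]

theorem y_notMem_labelWord (i : Fin 6) : Al.y ∉ labelWord i := by
  revert i
  decide

theorem y_notMem_access (x : Scan) : Al.y ∉ x.access := by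
  revert x
  decide

theorem foldlM_access (μ : Mode) (x : Scan) :
    x.access.foldlM trackStep (μ, .p) = some (μ, x) :=
  foldlM_trackStep_of_quiet (foldlM_quietStep_access x) μ

theorem exists_reset_trackStep (m : Track) :
    ∃ u : List Al, .y ∉ u ∧ ∀ m', u.foldlM trackStep m' = some m := by
  obtain ⟨⟨i, armed⟩, x⟩ := m
  cases armed with
  | false =>
    refine ⟨.res i :: x.access, by simp [y_notMem_access], fun m' => ?_⟩
    simp [trackStep_res, foldlM_access]
  | true =>
    have hi : i ≠ i + 1 := by decide +revert
    refine ⟨.res (i + 1) :: (labelWord i ++ x.access),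
      by simp [y_notMem_access, y_notMem_labelWord], fun m' => ?_⟩
    simp [trackStep_res, List.foldlM_append, foldlM_labelWord, Mode.update, hi, foldlM_access]

theorem exists_distinguishing_of_mode_ne {m m' : Track} (h : m.1 ≠ m'.1) :
    ∃ u : List Al, (u.foldlM trackStep m).isSome ≠ (u.foldlM trackStep m').isSome := by
  have key : ∀ μ μ' : Mode, μ ≠ μ' → ∃ i,
      (μ.update (.label i)).isSome ≠ (μ'.update (.label i)).isSome ∨
      ((μ.update (.label i)).bind (·.update (.label i))).isSome ≠
        ((μ'.update (.label i)).bind (·.update (.label i))).isSome := by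
    decide
  obtain ⟨i, hi | hi⟩ := key _ _ h
  · exact ⟨labelWord i, by simpa [foldlM_labelWord] using hi⟩
  · refine ⟨labelWord i ++ labelWord i, ?_⟩
    simpa [List.foldlM_append, foldlM_labelWord, Option.isSome_bind, Option.any_map,
      Function.comp_def] using hi

theorem exists_distinguishing_of_scan_ne (μ : Mode) {x x' : Scan} (h : x ≠ x') :
    ∃ u : List Al, (u.foldlM trackStep (μ, x)).isSome ≠ (u.foldlM trackStep (μ, x')).isSome := by
  have key : ∀ {x x' : Scan}, 1 < (x.labels \ x'.labels).card →
      ∃ u : List Al, (u.foldlM trackStep (μ, x)).isSome ≠ (u.foldlM trackStep (μ, x')).isSome := by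
    intro x x' hcard
    obtain ⟨i, hi, hiμ⟩ := Finset.exists_mem_ne hcard μ.label
    obtain ⟨hix, hix'⟩ := Finset.mem_sdiff.1 hi
    obtain ⟨u, hu⟩ := exists_distinguishing_of_mode_ne (m := (⟨i, true⟩, .p)) (m' := (μ, .p))
      (ne_of_apply_ne Mode.label hiμ)
    refine ⟨.num i :: u, ?_⟩
    have hstep : trackStep (μ, x) (.num i) = some (⟨i, true⟩, .p) := by
      simp [trackStep_num_of_event (mem_labels.1 hix), Mode.update, hiμ]
    have hstep' : trackStep (μ, x') (.num i) = some (μ, .p) := by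
      simp [trackStep, event_num_of_notMem hix', Mode.update, next_num]
    simpa [hstep, hstep'] using hu
  obtain ⟨v, x₁, x₁', hx, hx', hcard⟩ := exists_separating h
  obtain ⟨u, hu⟩ : ∃ u : List Al,
      (u.foldlM trackStep (μ, x₁)).isSome ≠ (u.foldlM trackStep (μ, x₁')).isSome := by
    rcases hcard with hcard | hcard
    · exact key hcard
    · obtain ⟨u, hu⟩ := key hcard
      exact ⟨u, hu.symm⟩
  refine ⟨v ++ u, ?_⟩
  rwa [foldlM_append_of_eq_some (foldlM_trackStep_of_quiet hx μ),
    foldlM_append_of_eq_some (foldlM_trackStep_of_quiet hx' μ)]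

theorem isKillMonitor_trackStep : IsKillMonitor trackStep .y where
  reset := exists_reset_trackStep
  kill := by
    refine ⟨.res 0 :: (labelWord 1 ++ labelWord 1), by decide, fun m => ?_⟩
    simp [trackStep_res, List.foldlM_append, foldlM_labelWord, Mode.update]
  mark m := ⟨(m.1, .p), trackStep_y m⟩
  reduced m m' h := by
    obtain ⟨μ, x⟩ := m
    obtain ⟨μ', x'⟩ := m'
    by_cases hμ : μ = μ'
    · subst hμ
      exact exists_distinguishing_of_scan_ne μ fun hx => h (by rw [hx])
    · exact exists_distinguishing_of_mode_ne hμ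

/-! ### Bottom components of the scan -/

namespace DetBuchi

variable {R : Type*} {D : DetBuchi Al R}

section QuietBottom

variable {G : Set (Scan × R)} {x x' : Scan} {k k' : R}

theorem IsBottom.exists_path_from_y (B : D.IsBottom quietStep G) (hk : (x, k) ∈ G)
    (hk' : (x', k') ∈ G) :
    ∃ v, (∀ m, (Al.y :: v).foldlM trackStep m = some (m.1, x')) ∧
      D.after k (.y :: v) = k' := by
  obtain ⟨v, hv, hvk⟩ := B.connected (B.run hk (u := [.y]) (by simpa using quietStep_y x)) hk'
  refine ⟨v, fun m => ?_, hvk⟩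
  simp [trackStep_y, foldlM_trackStep_of_quiet hv]

theorem IsBottom.exists_label_loop (B : D.IsBottom quietStep G)
    (H : D.Recognises (killLang trackStep .y)) (hk : (x, k) ∈ G) {i : Fin 6} (hi : i ∈ x.labels)
    (hnext : D.next k (.num i) ∈ statesOf G) :
    ∃ w : List Al, (∀ μ, w.foldlM trackStep (μ, x) = (μ.update (.label i)).map (·, x)) ∧
      D.after k w = k ∧ ¬ D.Passes k w := by
  obtain ⟨z, hz⟩ := hnext
  obtain ⟨v, hv, hvk⟩ := B.exists_path_from_y hz hk
  have hrun : ∀ μ : Mode, (Al.num i :: .y :: v).foldlM trackStep (μ, x) =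
      (μ.update (.label i)).map (·, x) := fun μ => by
    rw [List.foldlM_cons, trackStep_num_of_event (mem_labels.1 hi)]
    cases hμ : μ.update (.label i) <;> simp [hv]
  exact ⟨_, hrun, hvk, H.not_passes_of_loop misses_killLang (m := (⟨i, false⟩, x))
    (by simp [hrun, Mode.update]) hvk⟩

/-- Repeating either label alone must not be seen as progress, since it is compatible with a run of
the monitor; alternating between both labels kills the monitor. -/
theorem IsBottom.eq_of_labels (B : D.IsBottom quietStep G)
    (H : D.Recognises (killLang trackStep .y)) (hk : (x, k) ∈ G) {i j : Fin 6}
    (hi : i ∈ x.labels) (hj : j ∈ x.labels) (hnext : D.next k (.num i) ∈ statesOf G)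
    (hnext' : D.next k (.num j) ∈ statesOf G) : i = j := by
  by_contra hij
  obtain ⟨wi, hwi, hwik, hwi_quiet⟩ := B.exists_label_loop H hk hi hnext
  obtain ⟨wj, hwj, hwjk, hwj_quiet⟩ := B.exists_label_loop H hk hj hnext'
  obtain ⟨v, hv, hvk⟩ := B.exists_path_from_y hk hk
  have hv_quiet : ¬ D.Passes k (.y :: v) :=
    H.not_passes_of_loop misses_killLang (hv (⟨i, false⟩, x)) hvk
  have hdead : ∀ (μ : Mode) (i j : Fin 6), i ≠ j → (((μ.update (.label j)).bind
      (·.update (.label i))).bind (·.update (.label i))) = none := by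
    decide
  have hkill : Kills trackStep (.y :: v ++ wj ++ wi ++ wi) := fun m => by
    rw [List.append_assoc, List.append_assoc, foldlM_append_of_eq_some (hv m)]
    have hdead := hdead m.1 i j hij
    cases hμ : m.1.update (.label j) with
    | none => simp [List.foldlM_append, hwj, hμ]
    | some μ =>
      cases hμ' : μ.update (.label i) <;> simp_all [List.foldlM_append]
  refine absurd (H.passes_of_loop (q := k) (t := v) ?_ hkill) ?_
  · simp only [after_append, hvk, hwjk, hwik]
  · simp only [passes_append, after_append, hvk, hwjk, hwik, hv_quiet, hwj_quiet, hwi_quiet,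
      or_self, not_false_eq_true]

theorem IsBottom.scan_unique (B : D.IsBottom quietStep G)
    (H : D.Recognises (killLang trackStep .y)) (hk : (x, k) ∈ G) (hk' : (x', k) ∈ G) :
    x = x' := by
  have key : ∀ {x x' k}, (x, k) ∈ G → (x', k) ∈ G → ¬ 1 < (x.labels \ x'.labels).card := by
    intro x x' k hk hk' hcard
    have hnext : ∀ i ∉ x'.labels, D.next k (.num i) ∈ statesOf G := fun i hi =>
      ⟨x'.next (.num i), B.run hk' (u := [.num i]) (by simp [quietStep, event_num_of_notMem hi])⟩
    obtain ⟨i, hi, j, hj, hij⟩ := Finset.one_lt_card.1 hcard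
    rw [Finset.mem_sdiff] at hi hj
    exact hij (B.eq_of_labels H hk hi.1 hj.1 (hnext i hi.2) (hnext j hj.2))
  by_contra hne
  obtain ⟨v, x₁, x₁', hx, hx', hcard⟩ := exists_separating hne
  rcases hcard with hcard | hcard
  · exact key (B.run hk hx) (B.run hk' hx') hcard
  · exact key (B.run hk' hx') (B.run hk hx) hcard

theorem IsBottom.exists_scan (B : D.IsBottom quietStep G) (x : Scan) : ∃ k, (x, k) ∈ G := by
  obtain ⟨⟨x', k⟩, hk⟩ := B.nonempty
  exact ⟨_, B.run hk (u := .y :: x.access)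
    (by simp [quietStep_y, foldlM_quietStep_access])⟩

theorem IsBottom.exists_leaving (B : D.IsBottom quietStep G)
    (H : D.Recognises (killLang trackStep .y)) (hk : k ∈ statesOf G) :
    ∃ u, Al.y ∉ u ∧ D.after k u ∉ statesOf G := by
  obtain ⟨x, hk⟩ := hk
  by_contra! h
  have hlabels : ∀ x : Scan, x.event .c = .silent ∧ 0 ∈ (x.next .c).labels ∧
      1 ∈ (x.next .c).labels := by
    decide
  obtain ⟨hquiet, hzero, hone⟩ := hlabels x
  have hc : (x.next .c, D.after k [.c]) ∈ G := B.run hk (by simp [quietStep, hquiet])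
  exact absurd (B.eq_of_labels H hc hzero hone (h [.c, .num 0] (by simp))
    (h [.c, .num 1] (by simp))) (by decide)

end QuietBottom
/-! ### Counting the states of an automaton for `L_main` -/

theorem exists_arming {μ : Mode} {i : Fin 6} (hμ : μ ≠ ⟨i, false⟩) :
    ∃ v : List Al, v.foldlM trackStep (μ, .p) = some (⟨i, true⟩, .p) ∧
      v.foldlM trackStep (⟨i, false⟩, .p) = some (⟨i, false⟩, .p) := by
  by_cases hi : i = μ.label
  · obtain ⟨j, armed⟩ := μ
    obtain rfl : i = j := hi
    obtain rfl : armed = true := by simpa using hμ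
    exact ⟨[], rfl, rfl⟩
  · exact ⟨labelWord i, by simp [foldlM_labelWord, Mode.update, hi],
      by simp [foldlM_labelWord, Mode.update]⟩

section Counting

variable [Fintype R] {P : Set (Track × R)}

/-- Otherwise one copy of each of the `60` states of the monitor and of the `5` states of the scan
would be all the states. But a state away from the core lies in the component and can be led out
of it, still avoiding the core. -/
theorem IsCore.inter_statesOf_nonempty (C : D.IsCore trackStep P)
    (H : D.Recognises (killLang trackStep .y)) (hcard : Fintype.card R < 66)
    {G : Set (Scan × R)} (B : D.IsBottom quietStep G) : (statesOf P ∩ statesOf G).Nonempty := by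
  by_contra hempty
  have hdisjoint : ∀ k ∈ statesOf P, k ∉ statesOf G := fun k hk hk' => hempty ⟨k, hk, hk'⟩
  choose κ hκ using C.exists_state isKillMonitor_trackStep
  choose g hg using B.exists_scan
  have hinj : Function.Injective (Sum.elim κ g) :=
    (C.injective isKillMonitor_trackStep H hκ).sumElim
      (fun x x' h => B.scan_unique H (hg x) (h ▸ hg x'))
      fun m x h => hdisjoint (κ m) ⟨m, hκ m⟩ (h ▸ ⟨x, hg x⟩)
  have hcover : ∀ k, k ∈ statesOf P ∨ k ∈ statesOf G := fun k => by
    by_contra hk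
    rw [not_or] at hk
    have hlt := Fintype.card_lt_of_injective_of_notMem _ hinj (b := k) (by
      rintro ⟨m | x, rfl⟩
      · exact hk.1 ⟨m, hκ m⟩
      · exact hk.2 ⟨x, hg x⟩)
    rw [Fintype.card_sum, card_track, card_scan] at hlt
    omega
  obtain ⟨n, hn⟩ := C.exists_away isKillMonitor_trackStep H
  obtain ⟨u, hyu, hu⟩ := B.exists_leaving H ((hcover n).resolve_left hn.notMem)
  exact (hcover _).elim (hn u hyu) hu

theorem IsCore.exists_return (C : D.IsCore trackStep P)
    (H : D.Recognises (killLang trackStep .y)) (hcard : Fintype.card R < 66) (n : R) :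
    ∃ (u : List Al) (μ : Mode), (∀ ν, u.foldlM trackStep (ν, .p) = some (ν, .p)) ∧
      ((μ, .p), D.after n u) ∈ P := by
  obtain ⟨G, B, hG⟩ := exists_isBottom (D := D) (f := quietStep) (.p, n)
  obtain ⟨k, ⟨⟨μ, x⟩, hk⟩, x', hk'⟩ := C.inter_statesOf_nonempty H hcard B
  obtain ⟨u, hu, hnk⟩ := hG _ hk'
  refine ⟨u ++ [.y], μ, fun ν => ?_, ?_⟩
  · rw [foldlM_append_of_eq_some (foldlM_trackStep_of_quiet hu ν)]
    simp [trackStep_y]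
  · rw [after_append, hnk]
    exact C.run hk (by simp [trackStep_y])

theorem IsCore.exists_label_forall_ne (C : D.IsCore trackStep P)
    (H : D.Recognises (killLang trackStep .y)) (hcard : Fintype.card R < 66) (μ : R → Mode) :
    ∃ i, ∀ n, D.Away .y (statesOf P) n → μ n ≠ ⟨i, false⟩ := by
  by_contra! h
  choose g hg hgμ using h
  choose κ hκ using C.exists_state isKillMonitor_trackStep
  have hinj : Function.Injective (Sum.elim κ g) :=
    (C.injective isKillMonitor_trackStep H hκ).sumElim
      (fun i j h => congrArg Mode.label ((hgμ i).symm.trans ((congrArg μ h).trans (hgμ j))))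
      fun m i h => (hg i).notMem ⟨m, h ▸ hκ m⟩
  have hle := Fintype.card_le_of_injective _ hinj
  rw [Fintype.card_sum, card_track, Fintype.card_fin] at hle
  omega

theorem IsCore.exists_exit (C : D.IsCore trackStep P)
    (H : D.Recognises (killLang trackStep .y)) (hcard : Fintype.card R < 66) (i : Fin 6) :
    ∃ v : List Al, v.foldlM trackStep (⟨i, false⟩, .p) = some (⟨i, false⟩, .p) ∧
      v.foldlM trackStep (⟨i, true⟩, .p) = none ∧
      ∀ k, ((⟨i, true⟩, .p), k) ∈ P → D.Away .y (statesOf P) (D.after k v) := by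
  obtain ⟨x, k₁, hk₁, huniq⟩ := C.exists_unique_copy isKillMonitor_trackStep H
    (Prod.mk_right_injective (⟨i, true⟩ : Mode)) (by rw [card_track, card_scan]; omega)
  have hdead : (labelWord i).foldlM trackStep (⟨i, true⟩, x) = none := by
    simp [foldlM_labelWord, Mode.update]
  refine ⟨x.access ++ labelWord i, ?_, ?_, fun k hk => ?_⟩
  · simp [foldlM_append_of_eq_some (foldlM_access _ x), foldlM_labelWord, Mode.update]
  · rw [foldlM_append_of_eq_some (foldlM_access _ x), hdead]
  · rw [after_append, huniq _ (C.run hk (foldlM_access _ x))]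
    exact C.away_of_unique isKillMonitor_trackStep H hk₁ huniq (y_notMem_labelWord i) hdead

end Counting

/-- With fewer states, some label `i` is never the unarmed mode in which one returns to the core
from a state away from it. Then one can leave the core and return forever while the monitor,
started in the mode `⟨i, false⟩`, survives. -/
theorem Recognises.card_ge [Fintype R] [Nonempty R] (H : D.Recognises (killLang trackStep .y)) :
    66 ≤ Fintype.card R := by
  by_contra! hcard
  have : Nonempty Track := ⟨⟨0, false⟩, .p⟩
  obtain ⟨P, C⟩ := H.exists_isCore misses_killLang
  choose u μ hu hreturn using C.exists_return H hcard
  obtain ⟨i, hi⟩ := C.exists_label_forall_ne H hcard μ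
  obtain ⟨v, hv, hdead, hexit⟩ := C.exists_exit H hcard i
  obtain ⟨n, hn⟩ := C.exists_away isKillMonitor_trackStep H
  refine H.not_invariant_of_misses misses_killLang (I := fun m k => m = (⟨i, false⟩, .p) ∧
    ∃ ν ≠ ⟨i, false⟩, ((ν, .p), k) ∈ P) ?_ _ (D.after n (u n)) ⟨rfl, μ n, hi n hn, hreturn n⟩
  rintro _ k ⟨rfl, ν, hν, hk⟩
  obtain ⟨w, harm, hw⟩ := exists_arming hν
  have hkw := C.run hk harm
  have haway := hexit _ hkw
  set n' := D.after (D.after k w) v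
  have hpass : D.Passes (D.after k w) (v ++ u n') :=
    C.passes isKillMonitor_trackStep H hkw (foldlM_append_of_eq_none hdead _)
      ⟨_, by rw [after_append]; exact hreturn n'⟩
  refine ⟨w ++ (v ++ u n'), _, ?_, passes_append.2 (Or.inr hpass), rfl, μ n', hi n' haway, ?_⟩
  · rw [foldlM_append_of_eq_some hw, foldlM_append_of_eq_some hv, hu]
  · rw [after_append, after_append]
    exact hreturn n'

end DetBuchi

/-! ### The reachable part of a deterministic automaton -/

namespace BuchiAutomaton

variable {σ Q : Type} {A : BuchiAutomaton σ Q}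

open Classical in
/-- The transition function of a deterministic automaton, completed by loops. -/
noncomputable def next (A : BuchiAutomaton σ Q) (q : Q) (l : σ) : Q :=
  if h : ∃ q', (q, l, q') ∈ A.trans then h.choose else q

/-- The states that a deterministic automaton reaches from the initial one. -/
abbrev Reachable (A : BuchiAutomaton σ Q) : Type :=
  {q : Q // ∃ u : List σ, u.foldl A.next A.init = q}

/-- The reachable part of a deterministic automaton as a total automaton. -/
noncomputable def toDetBuchi (A : BuchiAutomaton σ Q) : DetBuchi σ A.Reachable where
  next q l := ⟨A.next q l, q.2.elim fun u hu => ⟨u ++ [l], by rw [List.foldl_concat, hu]⟩⟩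
  sig q l := (q.1, l, A.next q l) ∈ A.sig

theorem toDetBuchi_sig (q : A.Reachable) (l : σ) :
    A.toDetBuchi.sig q l ↔ (q.1, l, A.next q l) ∈ A.sig := Iff.rfl

theorem coe_after_toDetBuchi (q : A.Reachable) (u : List σ) :
    (A.toDetBuchi.after q u).val = u.foldl A.next q := by
  induction u generalizing q with
  | nil => rfl
  | cons _ _ ih => exact ih _

namespace Deterministic

theorem next_eq (hdet : A.Deterministic) {q q' : Q} {l : σ} (h : (q, l, q') ∈ A.trans) :
    A.next q l = q' := by
  have hex : ∃ q', (q, l, q') ∈ A.trans := ⟨q', h⟩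
  rw [next, dif_pos hex]
  exact hdet _ _ _ _ hex.choose_spec h

theorem eq_foldl_next (hdet : A.Deterministic) {w : ℕ → σ} {ρ : ℕ → Q}
    (h : A.IsRunFrom A.init w ρ) (n : ℕ) : ρ n = (wordSegment w 0 n).foldl A.next A.init := by
  induction n with
  | zero => simpa [wordSegment_self] using h.1
  | succ n ih =>
    rw [wordSegment_succ w n.zero_le, List.foldl_concat, ← ih, hdet.next_eq (h.2 n)]

theorem foldl_next_mem_trans (hdet : A.Deterministic) (hL : ShiftInvariant A.Lang)
    (hne : A.Lang.Nonempty) (u : List σ) (l : σ) :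
    (u.foldl A.next A.init, l, A.next (u.foldl A.next A.init) l) ∈ A.trans := by
  obtain ⟨w, hw⟩ := hne
  obtain ⟨w', hseg, rfl⟩ := exists_prepend (u ++ [l]) w
  obtain ⟨ρ, hρ, -⟩ := (hL _ _).1 hw
  obtain ⟨hu, hl⟩ := wordSegment_eq_append_cons hseg
  rw [Nat.zero_add] at hu hl
  have htrans := hρ.2 u.length
  rw [hdet.eq_foldl_next hρ u.length, hu, hl] at htrans
  rwa [hdet.next_eq htrans]

theorem mem_lang_iff (hdet : A.Deterministic) (hL : ShiftInvariant A.Lang)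
    (hne : A.Lang.Nonempty) {w : ℕ → σ} :
    w ∈ A.Lang ↔ A.toDetBuchi.Accepts ⟨A.init, [], rfl⟩ w := by
  let ρ : ℕ → Q := fun n => (wordSegment w 0 n).foldl A.next A.init
  have hsucc : ∀ n, ρ (n + 1) = A.next (ρ n) (w n) := fun n => by
    simp only [ρ]
    rw [wordSegment_succ w n.zero_le, List.foldl_concat]
  have hsig : ∀ n, A.toDetBuchi.sig (A.toDetBuchi.after ⟨A.init, [], rfl⟩ (wordSegment w 0 n))
      (w n) ↔ (ρ n, w n, ρ (n + 1)) ∈ A.sig := fun n => by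
    rw [hsucc]
    simp only [toDetBuchi_sig, coe_after_toDetBuchi, ρ]
  simp only [DetBuchi.Accepts, hsig]
  constructor
  · rintro ⟨ρ', hρ', hacc⟩
    obtain rfl : ρ' = ρ := funext (hdet.eq_foldl_next hρ')
    exact hacc
  · refine fun hacc => ⟨ρ, ⟨by simp [ρ, wordSegment_self], fun n => ?_⟩, hacc⟩
    rw [hsucc]
    exact hdet.foldl_next_mem_trans hL hne _ _

theorem recognises (hdet : A.Deterministic) (hL : ShiftInvariant A.Lang)
    (hne : A.Lang.Nonempty) : A.toDetBuchi.Recognises A.Lang := by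
  rintro ⟨_, u, rfl⟩ w
  obtain ⟨w', hseg, rfl⟩ := exists_prepend u w
  have hstate : A.toDetBuchi.after ⟨A.init, [], rfl⟩ u = ⟨u.foldl A.next A.init, u, rfl⟩ :=
    Subtype.ext (coe_after_toDetBuchi _ u)
  rw [hL, hdet.mem_lang_iff hL hne, ← DetBuchi.accepts_after_wordSegment_iff (d := u.length), hseg,
    hstate]

end Deterministic

end BuchiAutomaton

/-- Every deterministic Büchi automaton recognising `L_main`
has at least 66 states. -/
theorem det_buchi_for_LMain_ge_66 {Q : Type} [Fintype Q] (A : BuchiAutomaton Al Q)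
    (hdet : A.Deterministic) (hlang : A.Lang = LMain) :
    66 ≤ Fintype.card Q := by
  classical
  have : Nonempty A.Reachable := ⟨⟨A.init, [], rfl⟩⟩
  rw [LMain_eq_killLang] at hlang
  have H := hdet.recognises (hlang ▸ shiftInvariant_killLang)
    (hlang ▸ isKillMonitor_trackStep.killLang_nonempty)
  rw [hlang] at H
  exact H.card_ge.trans (Fintype.card_subtype_le _)
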